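/- Fix γ > 0, let Q : ℝ² → ℂ be smooth (infinitely differentiable), and fix (x, z) ∈ ℝ². Define I⁽⁴⁾Q(x, z; h) = (1/36)·[Q(x−2h, z−2γh) + Q(x−2h, z+2γh) + Q(x+2h, z−2γh) + Q(x+2h, z+2γh)] − (1/9)·[Q(x−h, z−2γh) + Q(x+h, z−2γh) + Q(x−2h, z−γh) + Q(x+2h, z−γh) + Q(x−h, z+2γh) + Q(x+h, z+2γh) + Q(x−2h, z+γh) + Q(x+2h, z+γh)] + (4/9)·[Q(x−h, z−γh) + Q(x+h, z−γh) + Q(x−h, z+γh) + Q(x+h, z+γh)]. Then I⁽⁴⁾Q(x, z; h) = Q(x, z) − (h⁴/6)·[∂⁴Q/∂x⁴(x, z) + γ⁴·∂⁴Q/∂z⁴(x, z)] + O(h⁶) as h → 0⁺; in particular I⁽⁴⁾Q(x, z; h) = Q(x, z) + O(h⁴). -/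

import Mathlib

noncomputable section

/-- The 16-point ring mass-lumping operator `I⁽⁴⁾`. -/
def I4 (γ : ℝ) (Q : ℝ × ℝ → ℂ) (x z h : ℝ) : ℂ :=
  (1 / 36) * (Q (x - 2 * h, z - 2 * γ * h) + Q (x - 2 * h, z + 2 * γ * h)
      + Q (x + 2 * h, z - 2 * γ * h) + Q (x + 2 * h, z + 2 * γ * h))
    - (1 / 9) * (Q (x - h, z - 2 * γ * h) + Q (x + h, z - 2 * γ * h)
        + Q (x - 2 * h, z - γ * h) + Q (x + 2 * h, z - γ * h)
        + Q (x - h, z + 2 * γ * h) + Q (x + h, z + 2 * γ * h)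
        + Q (x - 2 * h, z + γ * h) + Q (x + 2 * h, z + γ * h))
    + (4 / 9) * (Q (x - h, z - γ * h) + Q (x + h, z - γ * h)
        + Q (x - h, z + γ * h) + Q (x + h, z + γ * h))

/-- ∂⁴Q/∂x⁴ at (x, z). -/
def Dx4 (Q : ℝ × ℝ → ℂ) (x z : ℝ) : ℂ := iteratedDeriv 4 (fun t => Q (t, z)) x

/-- ∂⁴Q/∂z⁴ at (x, z). -/
def Dz4 (Q : ℝ × ℝ → ℂ) (x z : ℝ) : ℂ := iteratedDeriv 4 (fun t => Q (x, t)) z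

/-- one-dimensional averaging operator -/
def A1 (f : ℝ → ℂ) (x k : ℝ) : ℂ :=
  (2 / 3) * (f (x + k) + f (x - k)) - (1 / 6) * (f (x + 2 * k) + f (x - 2 * k))

lemma taylor_pos (f : ℝ → ℂ) (hf : ContDiff ℝ (⊤ : ℕ∞) f) (x R M : ℝ) (hR : 0 < R)
    (hM : ∀ s, |s| ≤ R → ‖iteratedDeriv 6 f (x + s)‖ ≤ M) (t : ℝ) (h0 : 0 ≤ t) (hR' : t ≤ R) :
    ‖f (x + t) - (f x + t * iteratedDeriv 1 f x + t ^ 2 / 2 * iteratedDeriv 2 f x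
      + t ^ 3 / 6 * iteratedDeriv 3 f x + t ^ 4 / 24 * iteratedDeriv 4 f x
      + t ^ 5 / 120 * iteratedDeriv 5 f x)‖ ≤ M * t ^ 6 := by
  have hM0 : 0 ≤ M := (norm_nonneg _).trans (hM 0 (by simpa using hR.le))
  have hu : UniqueDiffOn ℝ (Set.Icc x (x + R)) := uniqueDiffOn_Icc (by linarith)
  have key : ∀ n : ℕ, ∀ y ∈ Set.Icc x (x + R),
      iteratedDerivWithin n f (Set.Icc x (x + R)) y = iteratedDeriv n f y := fun n y hy =>
    iteratedDerivWithin_eq_iteratedDeriv hu (hf.contDiffAt.of_le (by exact_mod_cast le_top)) hy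
  have hx : x ∈ Set.Icc x (x + R) := ⟨le_rfl, by linarith⟩
  have := taylor_mean_remainder_bound (f := f) (a := x) (b := x + R) (C := M) (x := x + t) (n := 5)
    (by linarith) (contDiff_infty.1 hf 6).contDiffOn ⟨by linarith, by linarith⟩
    (by
      intro y hy
      rw [key _ y hy]
      have := hM (y - x) (by rw [abs_le]; constructor <;> linarith [hy.1, hy.2])
      simpa using this)
  rw [taylor_within_apply] at this
  simp only [Finset.sum_range_succ, Finset.sum_range_zero, key _ x hx, Nat.factorial] at this
  simp only [add_sub_cancel_left, iteratedDeriv_zero, Complex.real_smul] at this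
  refine le_trans (le_of_eq ?_) (this.trans ?_)
  · congr 1
    push_cast
    ring
  · push_cast
    have : 0 ≤ M * t ^ 6 := by positivity
    norm_num
    linarith

lemma taylor_neg (f : ℝ → ℂ) (hf : ContDiff ℝ (⊤ : ℕ∞) f) (x R M : ℝ) (hR : 0 < R)
    (hM : ∀ s, |s| ≤ R → ‖iteratedDeriv 6 f (x + s)‖ ≤ M) (t : ℝ) (h0 : 0 ≤ t) (hR' : t ≤ R) :
    ‖f (x - t) - (f x - t * iteratedDeriv 1 f x + t ^ 2 / 2 * iteratedDeriv 2 f x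
      - t ^ 3 / 6 * iteratedDeriv 3 f x + t ^ 4 / 24 * iteratedDeriv 4 f x
      - t ^ 5 / 120 * iteratedDeriv 5 f x)‖ ≤ M * t ^ 6 := by
  have := taylor_pos (fun y => f (-y)) (hf.comp contDiff_neg) (-x) R M hR
    (by
      intro s hs
      rw [iteratedDeriv_comp_neg]
      have := hM (-s) (by simpa using hs)
      norm_num
      simpa [add_comm] using this) t h0 hR'
  simp only [iteratedDeriv_comp_neg, Complex.real_smul] at this
  refine le_trans (le_of_eq ?_) this
  congr 1
  rw [show -(-x + t) = x - t by ring, neg_neg]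
  norm_num
  ring

lemma A1_bound (f : ℝ → ℂ) (hf : ContDiff ℝ (⊤ : ℕ∞) f) (x R M : ℝ) (hR : 0 < R)
    (hM : ∀ s, |s| ≤ R → ‖iteratedDeriv 6 f (x + s)‖ ≤ M) (k : ℝ) (h0 : 0 ≤ k) (hR' : 2 * k ≤ R) :
    ‖A1 f x k - (f x - (k : ℂ) ^ 4 / 6 * iteratedDeriv 4 f x)‖ ≤ 23 * M * k ^ 6 := by
  have h1 := taylor_pos f hf x R M hR hM k h0 (by linarith)
  have h2 := taylor_neg f hf x R M hR hM k h0 (by linarith)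
  have h3 := taylor_pos f hf x R M hR hM (2 * k) (by linarith) (by linarith)
  have h4 := taylor_neg f hf x R M hR hM (2 * k) (by linarith) (by linarith)
  have hM0 : 0 ≤ M := (norm_nonneg _).trans (hM 0 (by simpa using hR.le))
  set a := f (x + k) - _ with ha
  set b := f (x - k) - _ with hb
  set c := f (x + 2 * k) - _ with hc
  set d := f (x - 2 * k) - _ with hd
  have e : A1 f x k - (f x - (k : ℂ) ^ 4 / 6 * iteratedDeriv 4 f x)
      = (2 / 3) * (a + b) - (1 / 6) * (c + d) := by
    rw [ha, hb, hc, hd, A1]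
    push_cast
    ring
  rw [e]
  have n1 : ‖(2 / 3 : ℂ) * (a + b)‖ ≤ 2 / 3 * (‖a‖ + ‖b‖) := by
    rw [norm_mul]; norm_num; exact norm_add_le _ _
  have n2 : ‖(1 / 6 : ℂ) * (c + d)‖ ≤ 1 / 6 * (‖c‖ + ‖d‖) := by
    rw [norm_mul]; norm_num; exact norm_add_le _ _
  have := norm_sub_le ((2 / 3 : ℂ) * (a + b)) ((1 / 6) * (c + d))
  have : 0 ≤ M * k ^ 6 := by positivity
  have e2 : M * (2 * k) ^ 6 = 64 * (M * k ^ 6) := by ring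
  linarith

lemma A1_bound' (f : ℝ → ℂ) (hf : ContDiff ℝ (⊤ : ℕ∞) f) (x R : ℝ) (hR : 0 < R) :
    ∃ C : ℝ, 0 ≤ C ∧ ∀ k : ℝ, 0 ≤ k → 2 * k ≤ R →
    ‖A1 f x k - (f x - (k : ℂ) ^ 4 / 6 * iteratedDeriv 4 f x)‖ ≤ C * k ^ 6 := by
  have hc : Continuous (iteratedDeriv 6 f) :=
    (contDiff_infty.1 hf 6).continuous_iteratedDeriv 6 le_rfl
  obtain ⟨M, hM⟩ := (isCompact_Icc (a := x - R) (b := x + R)).exists_bound_of_continuousOn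
    hc.continuousOn
  have hM' : ∀ s, |s| ≤ R → ‖iteratedDeriv 6 f (x + s)‖ ≤ M := fun s hs => by
    rw [abs_le] at hs
    exact hM _ ⟨by linarith, by linarith⟩
  have hM0 : 0 ≤ M := (norm_nonneg _).trans (hM' 0 (by simpa using hR.le))
  exact ⟨23 * M, by positivity, fun k h0 hk => A1_bound f hf x R M hR hM' k h0 hk⟩

lemma partial_smooth (Q : ℝ × ℝ → ℂ) (hQ : ContDiff ℝ (⊤ : ℕ∞) Q) (n : ℕ) :
    ∃ P : ℝ × ℝ → ℂ, ContDiff ℝ (⊤ : ℕ∞) P ∧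
      ∀ s w, iteratedDeriv n (fun t => Q (t, w)) s = P (s, w) := by
  induction n with
  | zero => exact ⟨Q, hQ, fun s w => by simp⟩
  | succ n ih =>
    obtain ⟨P, hP, h⟩ := ih
    refine ⟨fun p => fderiv ℝ P p (1, 0), ?_, ?_⟩
    · exact (hP.fderiv_right (m := (⊤ : ℕ∞)) (by exact_mod_cast le_top)).clm_apply contDiff_const
    · intro s w
      rw [iteratedDeriv_succ, show iteratedDeriv n (fun t => Q (t, w)) = fun s => P (s, w) from
        funext fun s => h s w]
      have h1 : HasDerivAt (fun s : ℝ => (s, w)) ((1 : ℝ), (0 : ℝ)) s :=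
        (hasDerivAt_id s).prodMk (hasDerivAt_const s w)
      exact (((hP.differentiable (by simp)) (s, w)).hasFDerivAt.comp_hasDerivAt s h1).deriv

lemma A1_norm (f : ℝ → ℂ) (x k B : ℝ) (h1 : ‖f (x + k)‖ ≤ B) (h2 : ‖f (x - k)‖ ≤ B)
    (h3 : ‖f (x + 2 * k)‖ ≤ B) (h4 : ‖f (x - 2 * k)‖ ≤ B) : ‖A1 f x k‖ ≤ 2 * B := by
  have n1 : ‖(2 / 3 : ℂ) * (f (x + k) + f (x - k))‖ ≤ 2 / 3 * (‖f (x + k)‖ + ‖f (x - k)‖) := by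
    rw [norm_mul]; norm_num; exact norm_add_le _ _
  have n2 : ‖(1 / 6 : ℂ) * (f (x + 2 * k) + f (x - 2 * k))‖
      ≤ 1 / 6 * (‖f (x + 2 * k)‖ + ‖f (x - 2 * k)‖) := by
    rw [norm_mul]; norm_num; exact norm_add_le _ _
  have := norm_sub_le ((2 / 3 : ℂ) * (f (x + k) + f (x - k)))
    ((1 / 6 : ℂ) * (f (x + 2 * k) + f (x - 2 * k)))
  have := norm_nonneg (f (x + k))
  rw [A1]
  linarith

/-- expansion of the 16-point ring mass-lumping operator I⁽⁴⁾. -/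
theorem I4_expansion
    (γ : ℝ) (hγ : 0 < γ) (Q : ℝ × ℝ → ℂ) (hQ : ContDiff ℝ (⊤ : ℕ∞) Q) (x z : ℝ) :
    ∃ C δ : ℝ, 0 < C ∧ 0 < δ ∧ ∀ h : ℝ, 0 < h → h < δ →
      ‖I4 γ Q x z h - (Q (x, z)
          - ((h : ℂ) ^ 4 / 6) * (Dx4 Q x z + (γ : ℂ) ^ 4 * Dz4 Q x z))‖ ≤ C * h ^ 6
      ∧ ‖I4 γ Q x z h - Q (x, z)‖ ≤ C * h ^ 4 := by
  obtain ⟨P4, hP4, e4⟩ := partial_smooth Q hQ 4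
  obtain ⟨P6, hP6, e6⟩ := partial_smooth Q hQ 6
  have sx : ∀ w, ContDiff ℝ (⊤ : ℕ∞) (fun t : ℝ => Q (t, w)) := fun w =>
    hQ.comp (contDiff_id.prodMk contDiff_const)
  have sz : ContDiff ℝ (⊤ : ℕ∞) (fun t : ℝ => Q (x, t)) :=
    hQ.comp (contDiff_const.prodMk contDiff_id)
  have sg : ContDiff ℝ (⊤ : ℕ∞) (fun t : ℝ => P4 (x, t)) :=
    hP4.comp (contDiff_const.prodMk contDiff_id)
  obtain ⟨R, hRd⟩ : ∃ R : ℝ, R = 2 + 2 * γ := ⟨_, rfl⟩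
  have hR : 0 < R := by linarith
  obtain ⟨M, hM⟩ := ((isCompact_Icc (a := x - R) (b := x + R)).prod
    (isCompact_Icc (a := z - R) (b := z + R))).exists_bound_of_continuousOn
    hP6.continuous.continuousOn
  have hM0 : 0 ≤ M := (norm_nonneg _).trans (hM (x, z)
    ⟨⟨by simp; linarith, by simp; linarith⟩, ⟨by simp; linarith, by simp; linarith⟩⟩)
  obtain ⟨C1, hC1, b1⟩ := A1_bound' _ sz z R hR
  obtain ⟨C2, hC2, b2⟩ := A1_bound' _ sg z R hR
  obtain ⟨N, hN⟩ : ∃ N : ℝ, N = ‖iteratedDeriv 4 (fun t => P4 (x, t)) z‖ := ⟨_, rfl⟩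
  obtain ⟨L, hL⟩ : ∃ L : ℝ, L = ‖Dx4 Q x z + (γ : ℂ) ^ 4 * Dz4 Q x z‖ := ⟨_, rfl⟩
  have hN0 : 0 ≤ N := hN ▸ norm_nonneg _
  have hL0 : 0 ≤ L := hL ▸ norm_nonneg _
  obtain ⟨K, hK⟩ : ∃ K : ℝ, K = C1 * γ ^ 6 + (C2 * γ ^ 6 + γ ^ 4 * N) + 46 * M := ⟨_, rfl⟩
  have hK0 : 0 ≤ K := by rw [hK]; positivity
  refine ⟨K + L + 1, 1, by positivity, one_pos, ?_⟩
  intro h h0 h1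
  have hγh : γ * h ≤ γ := by nlinarith
  have hγh0 : 0 < γ * h := by positivity
  have b1 := b1 (γ * h) hγh0.le (by linarith)
  have b2 := b2 (γ * h) hγh0.le (by linarith)
  let E : ℝ → ℂ := fun w => A1 (fun t => Q (t, w)) x h - (Q (x, w) - (h : ℂ) ^ 4 / 6 * P4 (x, w))
  have hE : ∀ w, z - R ≤ w → w ≤ z + R → ‖E w‖ ≤ 23 * M * h ^ 6 := by
    intro w hw1 hw2
    have := A1_bound _ (sx w) x R M hR (by
      intro s hs
      rw [e6]
      rw [abs_le] at hs
      exact hM _ ⟨⟨by simp; linarith, by simp; linarith⟩, ⟨hw1, hw2⟩⟩) h h0.le (by linarith)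
    rw [e4] at this
    exact this
  have bE : ‖A1 E z (γ * h)‖ ≤ 2 * (23 * M * h ^ 6) := by
    apply A1_norm <;> apply hE <;> linarith
  set r1 := A1 (fun t => Q (x, t)) z (γ * h) - _ with hr1
  set r2 := A1 (fun t => P4 (x, t)) z (γ * h) - _ with hr2
  have hDx : Dx4 Q x z = P4 (x, z) := e4 x z
  have main : I4 γ Q x z h - (Q (x, z)
          - ((h : ℂ) ^ 4 / 6) * (Dx4 Q x z + (γ : ℂ) ^ 4 * Dz4 Q x z))
      = r1 - (h : ℂ) ^ 4 / 6 * (r2 - ((γ * h : ℝ) : ℂ) ^ 4 / 6 *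
          iteratedDeriv 4 (fun t => P4 (x, t)) z) + A1 E z (γ * h) := by
    rw [hr1, hr2, hDx, Dz4]
    simp only [E, A1, I4]
    rw [mul_assoc 2 γ h]
    push_cast
    ring
  have n3 : ‖r2 - ((γ * h : ℝ) : ℂ) ^ 4 / 6 * iteratedDeriv 4 (fun t => P4 (x, t)) z‖
      ≤ C2 * (γ * h) ^ 6 + (γ * h) ^ 4 * N := by
    refine (norm_sub_le _ _).trans (add_le_add b2 ?_)
    rw [norm_mul, ← hN, norm_div, norm_pow, Complex.norm_real, Real.norm_of_nonneg hγh0.le]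
    apply mul_le_mul_of_nonneg_right _ hN0
    have : 0 ≤ (γ * h) ^ 4 := by positivity
    norm_num
    linarith
  have nh : ‖(h : ℂ) ^ 4 / 6‖ = h ^ 4 / 6 := by
    rw [norm_div, norm_pow, Complex.norm_real, Real.norm_of_nonneg h0.le]; norm_num
  have p1 : h ^ 10 ≤ h ^ 6 := pow_le_pow_of_le_one h0.le h1.le (by norm_num)
  have p2 : h ^ 8 ≤ h ^ 6 := pow_le_pow_of_le_one h0.le h1.le (by norm_num)
  have p3 : h ^ 6 ≤ h ^ 4 := pow_le_pow_of_le_one h0.le h1.le (by norm_num)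
  have F : ‖I4 γ Q x z h - (Q (x, z)
          - ((h : ℂ) ^ 4 / 6) * (Dx4 Q x z + (γ : ℂ) ^ 4 * Dz4 Q x z))‖ ≤ K * h ^ 6 := by
    rw [main]
    have t1 := norm_add_le (r1 - (h : ℂ) ^ 4 / 6 * (r2 - ((γ * h : ℝ) : ℂ) ^ 4 / 6 *
          iteratedDeriv 4 (fun t => P4 (x, t)) z)) (A1 E z (γ * h))
    have t2 := norm_sub_le r1 ((h : ℂ) ^ 4 / 6 * (r2 - ((γ * h : ℝ) : ℂ) ^ 4 / 6 *
          iteratedDeriv 4 (fun t => P4 (x, t)) z))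
    rw [norm_mul, nh] at t2
    have t3 := mul_le_mul_of_nonneg_left n3 (show 0 ≤ h ^ 4 / 6 by positivity)
    have t4 : h ^ 4 / 6 * (C2 * (γ * h) ^ 6 + (γ * h) ^ 4 * N)
        ≤ (C2 * γ ^ 6 + γ ^ 4 * N) * h ^ 6 := by
      have u1 := mul_le_mul_of_nonneg_left p1 (show 0 ≤ C2 * γ ^ 6 by positivity)
      have u2 := mul_le_mul_of_nonneg_left p2 (show 0 ≤ γ ^ 4 * N by positivity)
      have u3 : 0 ≤ C2 * γ ^ 6 * h ^ 10 := by positivity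
      have u4 : 0 ≤ γ ^ 4 * N * h ^ 8 := by positivity
      have u5 : h ^ 4 / 6 * (C2 * (γ * h) ^ 6 + (γ * h) ^ 4 * N)
        = (C2 * γ ^ 6 * h ^ 10 + γ ^ 4 * N * h ^ 8) / 6 := by ring
      rw [u5, add_mul]
      linarith
    have t5 : K * h ^ 6 = C1 * (γ * h) ^ 6 + (C2 * γ ^ 6 + γ ^ 4 * N) * h ^ 6
        + 2 * (23 * M * h ^ 6) := by rw [hK]; ring
    linarith
  have p6 : 0 < h ^ 6 := by positivity
  have p4 : 0 < h ^ 4 := by positivity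
  refine ⟨F.trans (mul_le_mul_of_nonneg_right (by linarith) p6.le), ?_⟩
  have e : I4 γ Q x z h - Q (x, z) = (I4 γ Q x z h - (Q (x, z)
          - ((h : ℂ) ^ 4 / 6) * (Dx4 Q x z + (γ : ℂ) ^ 4 * Dz4 Q x z)))
          - ((h : ℂ) ^ 4 / 6) * (Dx4 Q x z + (γ : ℂ) ^ 4 * Dz4 Q x z) := by ring
  rw [e]
  refine (norm_sub_le _ _).trans ?_
  rw [norm_mul, nh, ← hL]
  have v1 := mul_le_mul_of_nonneg_left p3 hK0
  have v2 : 0 ≤ h ^ 4 * L := by positivity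
  have v3 : (K + L + 1) * h ^ 4 = K * h ^ 4 + h ^ 4 * L + h ^ 4 := by ring
  rw [v3]
  linarith

end
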